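/- Let G be a connected graph with at least one edge, u ∈ V(G), and α ∈ [0,1). For integers p ≥ q ≥ 1, let G_u(p,q) be the graph obtained from G by attaching two pendant paths of lengths p and q at u. Then ρ_α(G_u(p,q)) > ρ_α(G_u(p+1, q−1)). -/

import Mathlib

/-- The graph `G(L, u)` obtained from `G` by attaching, for each entry `ℓ` of the list `L`,
a pendant path with `ℓ` edges at the vertex `u`. -/
def attach {V : Type} (G : SimpleGraph V) (u : V) (L : List ℕ) :
    SimpleGraph (V ⊕ (Σ i : Fin L.length, Fin (L.get i))) :=
  SimpleGraph.fromRel (fun x y =>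
    match x, y with
    | Sum.inl a, Sum.inl b => G.Adj a b
    | Sum.inl a, Sum.inr ⟨_, j⟩ => a = u ∧ (j : ℕ) = 0
    | Sum.inr ⟨i, j⟩, Sum.inr ⟨i', j'⟩ => (i : ℕ) = (i' : ℕ) ∧ (j : ℕ) + 1 = (j' : ℕ)
    | _, _ => False)

/-- The matrix `A_α(G) = α D(G) + (1 - α) A(G)`. -/
noncomputable def Aalpha {V : Type} [Fintype V] [DecidableEq V] (α : ℝ) (G : SimpleGraph V) :
    Matrix V V ℝ :=
  letI := Classical.decRel G.Adj
  α • Matrix.diagonal (fun v => (G.degree v : ℝ)) + (1 - α) • G.adjMatrix ℝ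

/-- `ρ_α(G)`, the largest eigenvalue of `A_α(G)`. -/
noncomputable def rho {V : Type} [Fintype V] [DecidableEq V] (α : ℝ) (G : SimpleGraph V) : ℝ :=
  sSup (spectrum ℝ (Aalpha α G))


open Finset in
lemma aux_mulVec {V : Type} [Fintype V] [DecidableEq V] (α : ℝ) (G : SimpleGraph V)
    (x : V → ℝ) (v : V) :
    letI := Classical.decRel G.Adj
    (Aalpha α G).mulVec x v = ∑ w, if G.Adj v w then α * x v + (1 - α) * x w else 0 := by
  letI := Classical.decRel G.Adj
  have h1 : (G.degree v : ℝ) = ∑ w, if G.Adj v w then 1 else 0 := by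
    rw [← G.card_neighborFinset_eq_degree, G.neighborFinset_eq_filter]
    simp
  have h2 : (Aalpha α G).mulVec x v = α * (G.degree v * x v) +
      (1 - α) * ∑ w, if G.Adj v w then x w else 0 := by
    unfold Aalpha
    rw [Matrix.add_mulVec, Matrix.smul_mulVec, Matrix.smul_mulVec]
    simp only [Pi.add_apply, Pi.smul_apply, smul_eq_mul, Matrix.mulVec_diagonal]
    congr 2
    simp [Matrix.mulVec, dotProduct, SimpleGraph.adjMatrix_apply]
  rw [h2, h1, Finset.sum_mul, Finset.mul_sum, Finset.mul_sum, ← Finset.sum_add_distrib]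
  apply Finset.sum_congr rfl
  intro w _
  split_ifs <;> ring

lemma aux_herm {V : Type} [Fintype V] [DecidableEq V] (α : ℝ) (G : SimpleGraph V) :
    (Aalpha α G).IsHermitian := by
  ext i j
  simp [Aalpha, Matrix.conjTranspose, Matrix.diagonal_apply, SimpleGraph.adjMatrix_apply,
    G.adj_comm]
  try
    by_cases h : i = j
    · subst h; simp
    · simp [h, Ne.symm h]

lemma aux_psd {V : Type} [Fintype V] [DecidableEq V] (α : ℝ) (G : SimpleGraph V) :
    (algebraMap ℝ (Matrix V V ℝ) (rho α G) - Aalpha α G).PosSemidef := by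
  have hH := aux_herm α G
  rw [Matrix.posSemidef_iff_isHermitian_and_spectrum_nonneg]
  constructor
  · refine Matrix.IsHermitian.sub ?_ hH
    rw [Algebra.algebraMap_eq_smul_one]
    ext i j
    simp [Matrix.one_apply, eq_comm]
  · rw [← spectrum.singleton_sub_eq]
    rintro y ⟨a, ha, b, hb, rfl⟩
    rw [Set.mem_singleton_iff] at ha
    subst ha
    have hf : (spectrum ℝ (Aalpha α G)).Finite := by
      rw [hH.spectrum_real_eq_range_eigenvalues]
      exact Set.finite_range _
    have := le_csSup hf.bddAbove hb
    simp only [Set.mem_setOf_eq]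
    exact sub_nonneg.2 this

lemma aux_rayleigh {V : Type} [Fintype V] [DecidableEq V] (α : ℝ) (G : SimpleGraph V)
    (x : V → ℝ) :
    ∑ v, x v * (Aalpha α G).mulVec x v ≤ rho α G * ∑ v, x v * x v := by
  have h := (aux_psd α G).dotProduct_mulVec_nonneg x
  rw [Matrix.sub_mulVec, Algebra.algebraMap_eq_smul_one, Matrix.smul_mulVec,
    Matrix.one_mulVec, dotProduct_sub, dotProduct_smul] at h
  simp [dotProduct] at h
  linarith

lemma aux_eig_of_rayleigh {V : Type} [Fintype V] [DecidableEq V] (α : ℝ) (G : SimpleGraph V)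
    (x : V → ℝ)
    (hx : rho α G * ∑ v, x v * x v ≤ ∑ v, x v * (Aalpha α G).mulVec x v) (v : V) :
    (Aalpha α G).mulVec x v = rho α G * x v := by
  have h := ((aux_psd α G).dotProduct_mulVec_zero_iff x).1 (by
    have h := aux_rayleigh α G x
    rw [Matrix.sub_mulVec, Algebra.algebraMap_eq_smul_one, Matrix.smul_mulVec,
      Matrix.one_mulVec, dotProduct_sub, dotProduct_smul]
    simp [dotProduct]
    linarith)
  rw [Matrix.sub_mulVec, Algebra.algebraMap_eq_smul_one, Matrix.smul_mulVec,
      Matrix.one_mulVec] at h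
  have := congrFun h v
  simp at this
  linarith

lemma aux_perron {V : Type} [Fintype V] [DecidableEq V] [Nonempty V] (α : ℝ)
    (hα : 0 ≤ α ∧ α < 1) (G : SimpleGraph V) (hG : G.Preconnected) :
    ∃ x : V → ℝ, (∀ v, 0 < x v) ∧ ∀ v, (Aalpha α G).mulVec x v = rho α G * x v := by
  letI := Classical.decRel G.Adj
  have hH := aux_herm α G
  have hmem : rho α G ∈ spectrum ℝ (Aalpha α G) := by
    apply Set.Nonempty.csSup_mem
    · rw [hH.spectrum_real_eq_range_eigenvalues]; exact Set.range_nonempty _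
    · rw [hH.spectrum_real_eq_range_eigenvalues]; exact Set.finite_range _
  obtain ⟨y, hy0, hy⟩ : ∃ y : V → ℝ, y ≠ 0 ∧ (Aalpha α G).mulVec y = rho α G • y := by
    rw [← Matrix.spectrum_toLin', ← Module.End.hasEigenvalue_iff_mem_spectrum] at hmem
    obtain ⟨y, hy⟩ := hmem.exists_hasEigenvector
    exact ⟨y, hy.2, by simpa using hy.apply_eq_smul⟩
  have hx := aux_eig_of_rayleigh α G (fun v => |y v|) (by
    have e1 : ∑ v, |y v| * |y v| = ∑ v, y v * y v := by simp
    rw [e1, Finset.mul_sum]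
    apply Finset.sum_le_sum
    intro v _
    have h1 := congrFun hy v
    rw [aux_mulVec]
    simp only [Pi.smul_apply, smul_eq_mul] at h1
    rw [show rho α G * (y v * y v) = y v * (rho α G * y v) by ring, ← h1, aux_mulVec,
      Finset.mul_sum, Finset.mul_sum]
    apply Finset.sum_le_sum
    intro w _
    split_ifs
    · have h2 : y v * y w ≤ |y v| * |y w| := by rw [← abs_mul]; exact le_abs_self _
      have h3 : |y v| * |y v| = y v * y v := abs_mul_abs_self _
      have : (1 - α) * (y v * y w) ≤ (1 - α) * (|y v| * |y w|) :=
        mul_le_mul_of_nonneg_left h2 (by linarith [hα.2])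
      nlinarith
    · simp)
  have hz : ∀ v w, G.Adj v w → |y v| = 0 → |y w| = 0 := by
    intro v w hvw hv
    have h1 := hx v
    rw [aux_mulVec] at h1
    simp only [hv, mul_zero] at h1
    rw [Finset.sum_eq_zero_iff_of_nonneg] at h1
    · have := h1 w (Finset.mem_univ _)
      simp only [hvw, if_true, zero_add] at this
      rcases mul_eq_zero.1 this with h | h
      · linarith [hα.2]
      · exact h
    · intro w _
      split_ifs
      · have := mul_nonneg (by linarith [hα.2] : 0 ≤ 1 - α) (abs_nonneg (y w))
        linarith
      · exact le_rfl
  refine ⟨fun v => |y v|, ?_, hx⟩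
  intro v
  by_contra hv
  have hv0 : |y v| = 0 := le_antisymm (not_lt.1 hv) (abs_nonneg _)
  apply hy0
  funext w
  obtain ⟨W⟩ := hG v w
  have : |y w| = 0 := by
    clear hv
    induction W with
    | nil => exact hv0
    | cons h _ ih => exact ih (hz _ _ h hv0)
  simpa using this

lemma aux_gt {V : Type} [Fintype V] [DecidableEq V] (α : ℝ) (G : SimpleGraph V) (r : ℝ)
    (y : V → ℝ) (hy : ∀ v, 0 < y v) (u : V)
    (h : ∀ v, v ≠ u → r * y v ≤ (Aalpha α G).mulVec y v)
    (hu : r * y u < (Aalpha α G).mulVec y u) : r < rho α G := by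
  have h1 := aux_rayleigh α G y
  have h2 : r * ∑ v, y v * y v < ∑ v, y v * (Aalpha α G).mulVec y v := by
    rw [Finset.mul_sum]
    apply Finset.sum_lt_sum
    · intro v _
      have : r * y v ≤ (Aalpha α G).mulVec y v := by
        by_cases hv : v = u
        · rw [hv]; exact hu.le
        · exact h v hv
      nlinarith [hy v]
    · exact ⟨u, Finset.mem_univ _, by nlinarith [hy u]⟩
  have h3 : 0 < ∑ v, y v * y v :=
    Finset.sum_pos (fun v _ => mul_pos (hy v) (hy v)) ⟨u, Finset.mem_univ _⟩
  by_contra hc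
  nlinarith [not_lt.1 hc]

/-- The vector on the vertices of `attach G u L` given by `g` on `G` and `F i` on path `i`. -/
def avec {V : Type} (L : List ℕ) (g : V → ℝ) (F : ℕ → ℕ → ℝ) :
    V ⊕ (Σ i : Fin L.length, Fin (L.get i)) → ℝ
  | Sum.inl a => g a
  | Sum.inr ⟨i, j⟩ => F i j

lemma adj_ll {V : Type} (G : SimpleGraph V) (u : V) (L : List ℕ) (a b : V) :
    (attach G u L).Adj (Sum.inl a) (Sum.inl b) ↔ G.Adj a b := by
  simp only [attach, SimpleGraph.fromRel_adj]
  constructor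
  · rintro ⟨_, h | h⟩
    · exact h
    · exact h.symm
  · intro h
    exact ⟨by simpa using h.ne, Or.inl h⟩

lemma adj_lr {V : Type} (G : SimpleGraph V) (u : V) (L : List ℕ) (a : V)
    (i : Fin L.length) (j : Fin (L.get i)) :
    (attach G u L).Adj (Sum.inl a) (Sum.inr ⟨i, j⟩) ↔ (a = u ∧ (j : ℕ) = 0) := by
  simp [attach, SimpleGraph.fromRel_adj]

lemma adj_rr {V : Type} (G : SimpleGraph V) (u : V) (L : List ℕ)
    (i : Fin L.length) (j : Fin (L.get i)) (i' : Fin L.length) (j' : Fin (L.get i')) :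
    (attach G u L).Adj (Sum.inr ⟨i, j⟩) (Sum.inr ⟨i', j'⟩) ↔
      (i = i' ∧ ((j : ℕ) + 1 = j' ∨ (j' : ℕ) + 1 = j)) := by
  simp only [attach, SimpleGraph.fromRel_adj]
  constructor
  · rintro ⟨_, h | h⟩
    · exact ⟨Fin.ext h.1, Or.inl h.2⟩
    · exact ⟨Fin.ext h.1.symm, Or.inr h.2⟩
  · rintro ⟨rfl, h⟩
    refine ⟨?_, ?_⟩
    · intro hh
      simp at hh
      subst hh
      omega
    · simpa using h

lemma sum_fin_ite (n k : ℕ) (f : ℕ → ℝ) :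
    (∑ j : Fin n, if (j : ℕ) = k then f j else 0) = if k < n then f k else 0 := by
  rw [Fin.sum_univ_eq_sum_range (fun j => if j = k then f j else 0) n]
  simp [Finset.sum_ite_eq']

lemma mul_l {V : Type} [Fintype V] [DecidableEq V] (α : ℝ) (G : SimpleGraph V) (u : V)
    (L : List ℕ) (g : V → ℝ) (F : ℕ → ℕ → ℝ) (a : V) :
    (Aalpha α (attach G u L)).mulVec (avec L g F) (Sum.inl a) = (Aalpha α G).mulVec g a +
      if a = u then ∑ i : Fin L.length,
        (if 0 < L.get i then α * g a + (1 - α) * F i 0 else 0) else 0 := by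
  letI := Classical.decRel G.Adj
  rw [aux_mulVec, aux_mulVec, Fintype.sum_sum_type, Fintype.sum_sigma]
  simp only [adj_ll, adj_lr, avec]
  congr 1
  · by_cases h : a = u
    · simp only [h, true_and, if_true]
      apply Finset.sum_congr rfl
      intro i _
      rw [← sum_fin_ite _ 0 (fun j => α * g u + (1 - α) * F i j)]
    · simp [h]

lemma mul_r {V : Type} [Fintype V] [DecidableEq V] (α : ℝ) (G : SimpleGraph V) (u : V)
    (L : List ℕ) (g : V → ℝ) (F : ℕ → ℕ → ℝ) (i : Fin L.length) (j : Fin (L.get i)) :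
    (Aalpha α (attach G u L)).mulVec (avec L g F) (Sum.inr ⟨i, j⟩) =
      (α * F i j + (1 - α) * (if (j : ℕ) = 0 then g u else F i (j - 1))) +
      if (j : ℕ) + 1 < L.get i then α * F i j + (1 - α) * F i (j + 1) else 0 := by
  rw [aux_mulVec, Fintype.sum_sum_type, Fintype.sum_sigma]
  have e : ∀ a, (attach G u L).Adj (Sum.inr ⟨i, j⟩) (Sum.inl a) ↔ (a = u ∧ (j : ℕ) = 0) := by
    intro a; rw [SimpleGraph.adj_comm, adj_lr]
  simp only [adj_rr, e, avec]
  rw [Finset.sum_eq_single i]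
  rotate_left
  · intro i' _ hi
    apply Finset.sum_eq_zero
    intro j' _
    rw [if_neg]
    rintro ⟨h, _⟩
    exact hi h.symm
  · simp
  have s1 := sum_fin_ite (L.get i) (j + 1) (fun k => α * F i j + (1 - α) * F i k)
  have s2 := sum_fin_ite (L.get i) (j - 1) (fun k => α * F i j + (1 - α) * F i k)
  rw [← s1]
  by_cases hj : (j : ℕ) = 0
  · have : (∑ x, if x = u ∧ (j : ℕ) = 0 then α * F i j + (1 - α) * g x else 0) =
      α * F i j + (1 - α) * g u := by
      simp [hj]
    simp only [hj, and_true, if_true] at this ⊢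
    refine congrArg₂ (· + ·) ?_ ?_
    · convert this using 2
    · apply Finset.sum_congr rfl
      intro k _
      by_cases hk : (k : ℕ) = 1
      · rw [if_pos ⟨trivial, by omega⟩, if_pos (by omega)]
      · rw [if_neg (fun h => by have := h.2; omega), if_neg (by omega)]
  · have hlt : (j : ℕ) - 1 < L.get i := by have := j.2; omega
    rw [if_pos hlt] at s2
    simp only [hj, and_false, if_false, true_and, Finset.sum_const_zero, zero_add]
    rw [← s2, ← Finset.sum_add_distrib]
    apply Finset.sum_congr rfl
    intro k _
    by_cases h1 : (k : ℕ) = j - 1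
    · rw [if_pos (by omega), if_pos h1, if_neg (by omega), add_zero]
    · by_cases h2 : (k : ℕ) = j + 1
      · rw [if_pos (by omega), if_neg h1, if_pos h2, zero_add]
      · rw [if_neg (by omega), if_neg h1, if_neg h2, zero_add]

lemma attach_pre {V : Type} (G : SimpleGraph V) (hG : G.Connected) (u : V) (L : List ℕ) :
    (attach G u L).Preconnected := by
  have h1 : ∀ a, (attach G u L).Reachable (Sum.inl u) (Sum.inl a) := by
    intro a
    let φ : G →g attach G u L := ⟨Sum.inl, fun h => (adj_ll G u L _ _).2 h⟩
    exact (hG.preconnected u a).map φ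
  have h2 : ∀ (i : Fin L.length) (k : ℕ) (hk : k < L.get i),
      (attach G u L).Reachable (Sum.inl u) (Sum.inr ⟨i, ⟨k, hk⟩⟩) := by
    intro i k
    induction k with
    | zero =>
      intro hk
      exact ((adj_lr G u L u i ⟨0, hk⟩).2 ⟨rfl, rfl⟩).reachable
    | succ k ih =>
      intro hk
      exact (ih (by omega)).trans
        ((adj_rr G u L i ⟨k, by omega⟩ i ⟨k + 1, hk⟩).2 ⟨rfl, Or.inl rfl⟩).reachable
  have h3 : ∀ x, (attach G u L).Reachable (Sum.inl u) x := by
    rintro (a | ⟨i, ⟨k, hk⟩⟩)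
    · exact h1 a
    · exact h2 i k hk
  intro x y
  exact (h3 x).symm.trans (h3 y)

lemma avec_surj {V : Type} (L : List ℕ)
    (x : V ⊕ (Σ i : Fin L.length, Fin (L.get i)) → ℝ) :
    ∃ g F, x = avec L g F := by
  refine ⟨fun a => x (Sum.inl a), fun i j => if h : ∃ hi : i < L.length, j < L.get ⟨i, hi⟩ then
    x (Sum.inr ⟨⟨i, h.1⟩, ⟨j, h.2⟩⟩) else 0, ?_⟩
  funext v
  rcases v with a | ⟨i, j⟩
  · rfl
  · have h : ∃ hi : (i : ℕ) < L.length, (j : ℕ) < L.get ⟨i, hi⟩ := ⟨i.2, j.2⟩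
    simp only [avec]
    rw [dif_pos h]

/-- path sequence -/
noncomputable def Zs (s t : ℝ) : ℕ → ℝ
  | 0 => -s
  | 1 => 1
  | (k + 2) => t * Zs s t (k + 1) - Zs s t k

lemma Zs_w (s t : ℝ) (k : ℕ) :
    Zs s t (k + 1) ^ 2 - Zs s t k * Zs s t (k + 2) = 1 + s * Zs s t 2 := by
  induction k with
  | zero => simp [Zs]
  | succ k ih =>
    have e1 : Zs s t (k + 1 + 2) = t * Zs s t (k + 2) - Zs s t (k + 1) := rfl
    have e2 : Zs s t (k + 1 + 1) = t * Zs s t (k + 1) - Zs s t k := rfl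
    have e3 : Zs s t (k + 2) = t * Zs s t (k + 1) - Zs s t k := rfl
    rw [← ih, e1, e2]
    ring

lemma Zs_pair (s t : ℝ) (n : ℕ) : ∀ a, (∀ k, a ≤ k → k ≤ a + n + 1 → 0 < Zs s t k) →
    Zs s t a * Zs s t (a + n) < Zs s t (a + 1) * Zs s t (a + n + 1) →
    Zs s t a * Zs s t (a + 1) ≤ Zs s t (a + n) * Zs s t (a + n + 1) ∧
    (0 < n → Zs s t a * Zs s t (a + 1) < Zs s t (a + n) * Zs s t (a + n + 1)) := by
  induction n using Nat.twoStepInduction with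
  | zero => intro a _ _; simp
  | one =>
    intro a hp h
    have : Zs s t a * Zs s t (a + 1) < Zs s t (a + 1) * Zs s t (a + 1 + 1) := h
    exact ⟨this.le, fun _ => this⟩
  | more n ih _ =>
    intro a hp h
    have e1 : Zs s t (a + n + 3) = t * Zs s t (a + n + 2) - Zs s t (a + n + 1) := rfl
    have e2 : Zs s t (a + 2) = t * Zs s t (a + 1) - Zs s t a := rfl
    have i1 : a + 1 + n = a + n + 1 := by ring
    have ih' := ih (a + 1) (fun k h1 h2 => hp k (by omega) (by omega))
    rw [i1] at ih'
    change Zs s t a * Zs s t (a + n + 2) < Zs s t (a + 1) * Zs s t (a + n + 3) at h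
    change _ → Zs s t (a + 1) * Zs s t (a + 2) ≤ Zs s t (a + n + 1) * Zs s t (a + n + 2) ∧ _ at ih'
    change Zs s t a * Zs s t (a + 1) ≤ Zs s t (a + n + 2) * Zs s t (a + n + 3) ∧ (_ → 
      Zs s t a * Zs s t (a + 1) < Zs s t (a + n + 2) * Zs s t (a + n + 3))
    have h' : Zs s t (a + 1) * Zs s t (a + n + 1) < Zs s t (a + 2) * Zs s t (a + n + 2) := by
      rw [e1] at h; rw [e2]; nlinarith
    have h3 := (ih' h').1
    have p0 := hp a (by omega) (by omega)
    have p1 := hp (a + 1) (by omega) (by omega)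
    have p2 := hp (a + 2) (by omega) (by omega)
    have q1 := hp (a + n + 1) (by omega) (by omega)
    have q2 := hp (a + n + 2) (by omega) (by omega)
    have q3 := hp (a + n + 3) (by omega) (by omega)
    have key : Zs s t a * Zs s t (a + 1) < Zs s t (a + n + 2) * Zs s t (a + n + 3) := by
      generalize Zs s t a = x0 at *
      generalize Zs s t (a + 1) = x1 at *
      generalize Zs s t (a + 2) = x2 at *
      generalize Zs s t (a + n + 1) = y1 at *
      generalize Zs s t (a + n + 2) = y2 at *
      generalize Zs s t (a + n + 3) = y3 at *
      have m1 : (x0 * y2) * (x1 * y1) < (x1 * y3) * (x2 * y2) :=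
        mul_lt_mul'' h h' (by positivity) (by positivity)
      have m2 : (x0 * y2) * (x1 * y1) * (x1 * x2) < (x1 * y3) * (x2 * y2) * (y1 * y2) :=
        mul_lt_mul m1 h3 (by positivity) (by positivity)
      have m3 : (x1 * x2 * y1 * y2) * (x0 * x1) < (x1 * x2 * y1 * y2) * (y2 * y3) := by
        linarith
      exact lt_of_mul_lt_mul_left m3 (by positivity)
    exact ⟨key.le, fun _ => key⟩

lemma path_fwd (α ρ : ℝ) (hα : α < 1) (n : ℕ) : ∀ (u : ℝ) (f : ℕ → ℝ),
    (∀ j, j < n → ρ * f j = (α * f j + (1 - α) * (if j = 0 then u else f (j - 1))) +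
      if j + 1 < n then α * f j + (1 - α) * f (j + 1) else 0) →
    ∃ C, u = C * Zs (α / (1 - α)) ((ρ - 2 * α) / (1 - α)) (n + 1) ∧
      ∀ j, j < n → f j = C * Zs (α / (1 - α)) ((ρ - 2 * α) / (1 - α)) (n - j) := by
  have hb : (1 - α) ≠ 0 := by linarith
  induction n with
  | zero => intro u f _; exact ⟨u, by simp [Zs], by simp⟩
  | succ n ih =>
    intro u f h
    obtain ⟨C, h1, h2⟩ := ih (f 0) (fun j => f (j + 1)) (by
      intro j hj
      have := h (j + 1) (by omega)
      simp only [Nat.add_lt_add_iff_right, Nat.add_sub_cancel, Nat.succ_ne_zero, if_false] at this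
      rw [this]
      congr 3
      split_ifs with h0
      · rw [h0]
      · congr 1; omega)
    refine ⟨C, ?_, ?_⟩
    · have h0 := h 0 (by omega)
      have e : (if 0 + 1 < n + 1 then α * f 0 + (1 - α) * f (0 + 1) else 0) =
        α * f 0 + (1 - α) * (C * Zs (α / (1 - α)) ((ρ - 2 * α) / (1 - α)) n) := by
        split_ifs with hn
        · have := h2 0 (by omega)
          simp at this
          rw [zero_add, this]
        · have : n = 0 := by omega
          subst this
          rw [h1]
          simp [Zs]
          field_simp
          ring
      rw [e, if_pos rfl] at h0
      rw [Zs, ← sub_eq_zero]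
      have : (1 - α) * (u - C * ((ρ - 2 * α) / (1 - α) * Zs (α / (1 - α)) ((ρ - 2 * α) / (1 - α)) (n + 1) - Zs (α / (1 - α)) ((ρ - 2 * α) / (1 - α)) n)) = 0 := by
        rw [h1] at h0
        field_simp
        field_simp at h0
        linarith
      exact (mul_eq_zero.1 this).resolve_left hb
    · intro j hj
      rcases j with _ | j
      · simpa using h1
      · have := h2 j (by omega)
        simpa using this

lemma path_bwd (α ρ : ℝ) (hα : α < 1) (n : ℕ) (u C : ℝ) (f : ℕ → ℝ)
    (hu : u = C * Zs (α / (1 - α)) ((ρ - 2 * α) / (1 - α)) (n + 1))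
    (hf : ∀ j, f j = C * Zs (α / (1 - α)) ((ρ - 2 * α) / (1 - α)) (n - j)) (j : ℕ) (hj : j < n) :
    ρ * f j = (α * f j + (1 - α) * (if j = 0 then u else f (j - 1))) +
      if j + 1 < n then α * f j + (1 - α) * f (j + 1) else 0 := by
  have hb : (1 - α) ≠ 0 := by linarith
  obtain ⟨m, rfl⟩ : ∃ m, n = j + m + 1 := ⟨n - j - 1, by omega⟩
  have e1 : (if j = 0 then u else f (j - 1)) =
      C * Zs (α / (1 - α)) ((ρ - 2 * α) / (1 - α)) (m + 2) := by
    split_ifs with h0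
    · rw [hu, h0]; congr 2; omega
    · rw [hf]; congr 2; omega
  have e0 : f j = C * Zs (α / (1 - α)) ((ρ - 2 * α) / (1 - α)) (m + 1) := by
    rw [hf]; congr 2; omega
  have e2 : (if j + 1 < j + m + 1 then α * f j + (1 - α) * f (j + 1) else 0) =
      α * f j + (1 - α) * (C * Zs (α / (1 - α)) ((ρ - 2 * α) / (1 - α)) m) := by
    split_ifs with h0
    · rw [hf (j + 1)]; congr 4; omega
    · have : m = 0 := by omega
      subst this
      rw [e0]
      simp [Zs]
      field_simp
      ring
  rw [e2, e1, e0, Zs]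
  field_simp
  ring

/-- The algebraic core at the vertex `u`. -/
lemma core (s t : ℝ) (p q : ℕ) (hs : 0 ≤ s) (hq : 1 ≤ q) (hpq : q ≤ p)
    (hZ : ∀ k, 1 ≤ k → k ≤ p + 2 → 0 < Zs s t k)
    (h : Zs s t (p + 1) / Zs s t (p + 2) + Zs s t (q - 1) / Zs s t q < t) :
    Zs s t (p + 1) / Zs s t (p + 2) + Zs s t (q - 1) / Zs s t q <
      Zs s t p / Zs s t (p + 1) + Zs s t q / Zs s t (q + 1) := by
  obtain ⟨r, rfl⟩ : ∃ r, q = r + 1 := ⟨q - 1, by omega⟩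
  simp only [Nat.add_sub_cancel] at h ⊢
  obtain ⟨n, rfl⟩ : ∃ n, p = r + 1 + n := ⟨p - (r + 1), by omega⟩
  have pos1 := hZ (r + 1) (by omega) (by omega)
  have pos2 := hZ (r + 2) (by omega) (by omega)
  have pos3 := hZ (r + 1 + n + 1) (by omega) (by omega)
  have pos4 := hZ (r + 1 + n + 2) (by omega) (by omega)
  have e : Zs s t (r + 2) = t * Zs s t (r + 1) - Zs s t r := rfl
  have hk := (Zs_pair s t (n + 1) (r + 1) (fun k h1 h2 => hZ k (by omega) (by omega)) (by
    change Zs s t (r + 1) * Zs s t (r + 1 + n + 1) < Zs s t (r + 2) * Zs s t (r + 1 + n + 2)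
    have : Zs s t (r + 1 + n + 1) / Zs s t (r + 1 + n + 2) < Zs s t (r + 2) / Zs s t (r + 1) := by
      have : Zs s t (r + 2) / Zs s t (r + 1) = t - Zs s t r / Zs s t (r + 1) := by
        rw [e]; field_simp
      linarith
    rw [div_lt_div_iff₀ pos4 pos1] at this
    linarith)).2 (by omega)
  change Zs s t (r + 1) * Zs s t (r + 2) < Zs s t (r + 1 + n + 1) * Zs s t (r + 1 + n + 2) at hk
  have w1 := Zs_w s t r
  have w2 := Zs_w s t (r + 1 + n)
  have hW : 0 < 1 + s * Zs s t 2 := by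
    have := hZ 2 (by omega) (by omega)
    positivity
  have d1 : Zs s t (r + 1) / Zs s t (r + 2) - Zs s t r / Zs s t (r + 1) =
      (1 + s * Zs s t 2) / (Zs s t (r + 1) * Zs s t (r + 2)) := by
    rw [← w1]; field_simp
  have d2 : Zs s t (r + 1 + n + 1) / Zs s t (r + 1 + n + 2) -
      Zs s t (r + 1 + n) / Zs s t (r + 1 + n + 1) =
      (1 + s * Zs s t 2) / (Zs s t (r + 1 + n + 1) * Zs s t (r + 1 + n + 2)) := by
    rw [← w2]; field_simp
  have := div_lt_div_of_pos_left hW (mul_pos pos1 pos2) hk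
  change _ < Zs s t (r + 1 + n) / Zs s t (r + 1 + n + 1) + Zs s t (r + 1) / Zs s t (r + 2)
  linarith

lemma end_term (α t C u : ℝ) (hα : α < 1) (n : ℕ) (f0 : ℝ)
    (hu : u = C * Zs (α / (1 - α)) t (n + 1))
    (hf : 0 < n → f0 = C * Zs (α / (1 - α)) t n) :
    (if 0 < n then α * u + (1 - α) * f0 else 0) =
      α * u + (1 - α) * (C * Zs (α / (1 - α)) t n) := by
  have hb : (1 - α) ≠ 0 := by linarith
  split_ifs with h
  · rw [hf h]
  · have : n = 0 := by omega
    subst this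
    rw [hu]
    simp [Zs]
    field_simp
    ring

theorem stmt15 {M : ℕ} (G : SimpleGraph (Fin (M + 1))) (hG : G.Connected)
    (hE : ∃ v w, G.Adj v w) (u : Fin (M + 1))
    (α : ℝ) (hα : 0 ≤ α ∧ α < 1) (p q : ℕ) (hq : 1 ≤ q) (hpq : q ≤ p) :
    rho α (attach G u [p + 1, q - 1]) < rho α (attach G u [p, q]) := by
  obtain ⟨x, hxpos, hx⟩ := aux_perron α hα _ (attach_pre G hG u [p + 1, q - 1])
  obtain ⟨g, F, rfl⟩ := avec_surj _ x
  generalize rho α (attach G u [p + 1, q - 1]) = ρ at hx ⊢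
  have hb : 0 < 1 - α := by linarith [hα.2]
  have hg : ∀ a, 0 < g a := fun a => hxpos (Sum.inl a)
  have hF0 : ∀ j, j < p + 1 → 0 < F 0 j := fun j hj => hxpos (Sum.inr ⟨⟨0, by simp⟩, ⟨j, hj⟩⟩)
  -- equations along the two paths
  obtain ⟨C1, hu1, hC1⟩ := path_fwd α ρ hα.2 (p + 1) (g u) (F 0) (by
    intro j hj
    have := hx (Sum.inr ⟨⟨0, by simp⟩, ⟨j, hj⟩⟩)
    rw [mul_r] at this
    exact this.symm)
  obtain ⟨C2, hu2, hC2⟩ := path_fwd α ρ hα.2 (q - 1) (g u) (F 1) (by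
    intro j hj
    have := hx (Sum.inr ⟨⟨1, by simp⟩, ⟨j, hj⟩⟩)
    rw [mul_r] at this
    exact this.symm)
  have hsum : ∀ (a b : ℕ) (F : ℕ → ℕ → ℝ),
      (∑ i : Fin [a, b].length, (if 0 < [a, b].get i then α * g u + (1 - α) * F i 0 else 0)) =
      (if 0 < a then α * g u + (1 - α) * F 0 0 else 0) +
      (if 0 < b then α * g u + (1 - α) * F 1 0 else 0) := by
    intro a b F
    exact Fin.sum_univ_two
      (fun i : Fin 2 => (if 0 < [a, b].get i then α * g u + (1 - α) * F i 0 else 0))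
  have hxu := hx (Sum.inl u)
  rw [mul_l, if_pos rfl, hsum] at hxu
  rw [end_term α _ C1 (g u) hα.2 (p + 1) (F 0 0) hu1 (fun h => hC1 0 h),
    end_term α _ C2 (g u) hα.2 (q - 1) (F 1 0) hu2 (fun h => hC2 0 h)] at hxu
  change _ = ρ * g u at hxu
  rw [show q - 1 + 1 = q by omega] at hu2
  change g u = C1 * Zs _ _ (p + 2) at hu1
  have hgu := hg u
  have hC1pos : 0 < C1 := by
    have h1 := hC1 p (by omega)
    rw [show p + 1 - p = 1 by omega, Zs, mul_one] at h1
    rw [← h1]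
    exact hF0 p (by omega)
  have ht : ρ = (1 - α) * ((ρ - 2 * α) / (1 - α)) + 2 * α := by field_simp; ring
  have hs : 0 ≤ α / (1 - α) := div_nonneg hα.1 hb.le
  have hZ : ∀ k, 1 ≤ k → k ≤ p + 2 → 0 < Zs (α / (1 - α)) ((ρ - 2 * α) / (1 - α)) k := by
    intro k h1 h2
    rcases Nat.lt_or_ge k (p + 2) with h | h
    · have h3 := hC1 (p + 1 - k) (by omega)
      rw [show p + 1 - (p + 1 - k) = k by omega] at h3
      have := hF0 (p + 1 - k) (by omega)
      rw [h3] at this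
      exact pos_of_mul_pos_right this hC1pos.le
    · have : k = p + 2 := by omega
      rw [this]
      rw [hu1] at hgu
      exact pos_of_mul_pos_right hgu hC1pos.le
  have hS : 0 < (Aalpha α G).mulVec g u := by
    letI := Classical.decRel G.Adj
    rw [aux_mulVec]
    obtain ⟨w, hw⟩ : ∃ w, G.Adj u w := by
      obtain ⟨v, w, hvw⟩ := hE
      haveI : Nontrivial (Fin (M + 1)) := ⟨v, w, hvw.ne⟩
      exact hG.preconnected.exists_adj_of_nontrivial u
    have hterm : ∀ w, 0 < α * g u + (1 - α) * g w := fun w => by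
      have := mul_pos hb (hg w)
      have := mul_nonneg hα.1 hgu.le
      linarith
    apply Finset.sum_pos'
    · intro w _
      split_ifs
      · exact (hterm w).le
      · exact le_rfl
    · exact ⟨w, Finset.mem_univ _, by rw [if_pos hw]; exact hterm w⟩
  generalize hs' : α / (1 - α) = s at *
  generalize ht' : (ρ - 2 * α) / (1 - α) = t at *
  have P2 := hZ (p + 2) (by omega) (by omega)
  have P1 := hZ (p + 1) (by omega) (by omega)
  have Q0 := hZ q (by omega) (by omega)
  have Q1 := hZ (q + 1) (by omega) (by omega)
  have c1 : C1 = g u / Zs s t (p + 2) := by rw [hu1]; field_simp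
  have c2 : C2 = g u / Zs s t q := by rw [hu2]; field_simp
  have hbal : (Aalpha α G).mulVec g u + (1 - α) * g u *
      (Zs s t (p + 1) / Zs s t (p + 2) + Zs s t (q - 1) / Zs s t q) = (1 - α) * g u * t := by
    have : C1 * Zs s t (p + 1) = g u * (Zs s t (p + 1) / Zs s t (p + 2)) := by rw [c1]; ring
    rw [this] at hxu
    have : C2 * Zs s t (q - 1) = g u * (Zs s t (q - 1) / Zs s t q) := by rw [c2]; ring
    rw [this, ht] at hxu
    linarith
  have hbg : 0 < (1 - α) * g u := mul_pos hb hgu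
  have hcore := core s t p q hs hq hpq hZ (by
    refine lt_of_mul_lt_mul_left ?_ hbg.le
    linarith)
  -- the test vector
  let F' : ℕ → ℕ → ℝ := fun i j => if i = 0 then g u / Zs s t (p + 1) * Zs s t (p - j)
    else g u / Zs s t (q + 1) * Zs s t (q - j)
  have hp' : g u = g u / Zs s t (p + 1) * Zs s t (p + 1) := by field_simp
  have hq' : g u = g u / Zs s t (q + 1) * Zs s t (q + 1) := by field_simp
  have key0 := path_bwd α ρ hα.2 p (g u) (g u / Zs s t (p + 1)) (F' 0)
    (by rw [hs', ht']; exact hp') (by intro j; rw [hs', ht']; simp [F'])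
  have key1 := path_bwd α ρ hα.2 q (g u) (g u / Zs s t (q + 1)) (F' 1)
    (by rw [hs', ht']; exact hq') (by intro j; rw [hs', ht']; simp [F'])
  apply aux_gt α (attach G u [p, q]) ρ (avec [p, q] g F') ?_ (Sum.inl u)
  · rintro (a | ⟨i, j⟩) hv
    · have ha : a ≠ u := fun h => hv (by rw [h])
      have := hx (Sum.inl a)
      rw [mul_l, if_neg ha, add_zero] at this
      rw [mul_l, if_neg ha, add_zero, this]
      exact le_rfl
    · rw [mul_r]
      match i, j with
      | ⟨0, _⟩, j => exact (key0 j j.2).le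
      | ⟨1, _⟩, j => exact (key1 j j.2).le
  · rw [mul_l, if_pos rfl, hsum]
    rw [end_term α t (g u / Zs s t (p + 1)) (g u) hα.2 p (F' 0 0) (by rw [hs']; exact hp')
        (by intro _; rw [hs']; simp [F']),
      end_term α t (g u / Zs s t (q + 1)) (g u) hα.2 q (F' 1 0) (by rw [hs']; exact hq')
        (by intro _; rw [hs']; simp [F'])]
    change ρ * g u < _
    rw [hs']
    have := mul_lt_mul_of_pos_left hcore hbg
    rw [ht]
    have e1 : g u / Zs s t (p + 1) * Zs s t p = g u * (Zs s t p / Zs s t (p + 1)) := by ring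
    have e2 : g u / Zs s t (q + 1) * Zs s t q = g u * (Zs s t q / Zs s t (q + 1)) := by ring
    rw [e1, e2]
    linarith
  · rintro (a | ⟨i, j⟩)
    · exact hg a
    · match i, j with
      | ⟨0, _⟩, j =>
        have hj : (j : ℕ) < p := j.2
        exact mul_pos (div_pos hgu P1) (hZ _ (by omega) (by omega))
      | ⟨1, _⟩, j =>
        have hj : (j : ℕ) < q := j.2
        exact mul_pos (div_pos hgu Q1) (hZ _ (by omega) (by omega))
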